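/- There is an injective group homomorphism φ : F → F (the shift) satisfying φ(x_n) = x_{n+1} for all n ≥ 0, and φ is idempotent up to conjugacy: φ(φ(f)) = x₀⁻¹ · φ(f) · x₀ for every f ∈ F. -/

import Mathlib

/-- The defining relations of Thompson's group `F`:
`xᵢ⁻¹ xₙ xᵢ xₙ₊₁⁻¹` for all natural numbers `i < n`. -/
def thompsonRels : Set (FreeGroup ℕ) :=
  {r | ∃ i n : ℕ, i < n ∧
    r = (FreeGroup.of i)⁻¹ * FreeGroup.of n * FreeGroup.of i * (FreeGroup.of (n + 1))⁻¹}

/-- Thompson's group `F`. -/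
abbrev ThompsonF : Type := PresentedGroup thompsonRels

/-- The image of the `n`-th generator in Thompson's group `F`. -/
def x (n : ℕ) : ThompsonF := PresentedGroup.of n

/-!
Write `t = x 0` and let `φ` be the shift. As `t` semiconjugates `φ (φ g)` to `φ g`, powers of `t`
can be moved past the image of `φ`, so every `f` satisfies `f * t ^ b = t ^ a * φ g` for some `a`,
`b`, `g`. If `φ f = 1`, applying `φ` puts the power `φ t ^ (b - a)` into the range of `φ ∘ φ`. The
action of `F` on the line by piecewise linear homeomorphisms shows that this forces `a = b`: the
range of `φ ∘ φ` fixes the point `2`, while no nontrivial power of `φ t = x 1` does. Then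
`φ (φ g) = 1`, so its conjugate `φ g` is trivial, and hence `f = 1`.
-/

/-- Idempotence of `φ` up to conjugation by `t`, in the inverse-free form
`t * φ (φ g) = φ g * t`. -/
def IsConjIdempotent {M : Type*} [Monoid M] (φ : M →* M) (t : M) : Prop :=
  ∀ g, SemiconjBy t (φ (φ g)) (φ g)

namespace IsConjIdempotent

theorem semiconjBy_pow {M : Type*} [Monoid M] {φ : M →* M} {t : M} (h : IsConjIdempotent φ t)
    (n : ℕ) (g : M) : SemiconjBy (t ^ n) (φ (φ^[n] g)) (φ g) := by
  induction n generalizing g with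
  | zero => simp
  | succ n ih =>
    rw [pow_succ', Function.iterate_succ_apply]
    exact (h g).mul_left (ih (φ g))

variable {G : Type*} [Group G] {φ : G →* G} {t : G}

theorem iff_eq_inv_mul_mul : IsConjIdempotent φ t ↔ ∀ g, φ (φ g) = t⁻¹ * φ g * t :=
  forall_congr' fun g => by rw [SemiconjBy, mul_assoc, eq_inv_mul_iff_mul_eq]

theorem exists_mul_pow_eq_pow_mul_map (h : IsConjIdempotent φ t)
    (hgen : Subgroup.closure (insert t (Set.range φ)) = ⊤) (f : G) :
    ∃ (a b : ℕ) (g : G), f * t ^ b = t ^ a * φ g := by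
  have left_mul_map (u f : G) (hf : ∃ (a b : ℕ) (g : G), f * t ^ b = t ^ a * φ g) :
      ∃ (a b : ℕ) (g : G), φ u * f * t ^ b = t ^ a * φ g := by
    obtain ⟨a, b, g, hg⟩ := hf
    refine ⟨a, b, φ^[a] u * g, ?_⟩
    rw [mul_assoc, hg, ← mul_assoc, ← (h.semiconjBy_pow a u).eq, map_mul, mul_assoc]
  have hf : f ∈ Subgroup.closure (insert t (Set.range φ)) := hgen ▸ Subgroup.mem_top f
  induction hf using Subgroup.closure_induction_left with
  | one => exact ⟨0, 0, 1, by simp⟩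
  | mul_left s hs f _ ih =>
    obtain rfl | ⟨u, rfl⟩ := hs
    · obtain ⟨a, b, g, hg⟩ := ih
      exact ⟨a + 1, b, g, by rw [mul_assoc, hg, pow_succ', mul_assoc]⟩
    · exact left_mul_map u f ih
  | inv_mul_cancel s hs f _ ih =>
    obtain rfl | ⟨u, rfl⟩ := hs
    · obtain ⟨a, b, g, hg⟩ := ih
      refine ⟨a, b + 1, φ g, ?_⟩
      rw [mul_assoc, inv_mul_eq_iff_eq_mul, pow_succ, ← mul_assoc, hg, mul_assoc, ← (h g).eq,
        ← mul_assoc, ← mul_assoc, ← pow_succ, pow_succ']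
    · rw [← map_inv]
      exact left_mul_map u⁻¹ f ih

theorem map_eq_one_of_map_map_eq_one (h : IsConjIdempotent φ t) {g : G} (hg : φ (φ g) = 1) :
    φ g = 1 := by
  simpa [SemiconjBy, hg] using h g

theorem injective (h : IsConjIdempotent φ t)
    (hgen : Subgroup.closure (insert t (Set.range φ)) = ⊤)
    (hpow : ∀ n : ℕ, φ t ^ n ∈ (φ.comp φ).range → n = 0) : Function.Injective φ := by
  refine (injective_iff_map_eq_one φ).2 fun f hf => ?_
  obtain ⟨a, b, g, hg⟩ := h.exists_mul_pow_eq_pow_mul_map hgen f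
  have hφ : φ t ^ b = φ t ^ a * φ (φ g) := by simpa [hf] using congrArg φ hg
  have hab : a = b := by
    obtain hle | hle := le_total a b <;> obtain ⟨k, rfl⟩ := Nat.exists_eq_add_of_le hle
    · rw [pow_add, mul_right_inj] at hφ
      simp [hpow k ⟨g, hφ.symm⟩]
    · rw [pow_add, mul_assoc, left_eq_mul, mul_eq_one_iff_eq_inv] at hφ
      simp [hpow k ⟨g⁻¹, by simp [hφ]⟩]
  subst hab
  have hg_one : φ g = 1 := h.map_eq_one_of_map_map_eq_one (left_eq_mul.1 hφ)
  simpa [hg_one] using hg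

end IsConjIdempotent

section PiecewiseLinear

variable {K : Type*} [Field K] [LinearOrder K] [IsStrictOrderedRing K]

/-- The piecewise linear homeomorphism of the line which is the identity up to `c`, has slope `2`
on `[c, c + 1]` and is the translation by `1` beyond `c + 1`. In the action of Thompson's group on
the line, `x n` acts as the inverse of `stretchAt n`. -/
def stretchAt (c : K) : Equiv.Perm K where
  toFun t := if t ≤ c then t else if t ≤ c + 1 then 2 * t - c else t + 1
  invFun t := if t ≤ c then t else if t ≤ c + 2 then (t + c) / 2 else t - 1
  left_inv t := by
    dsimp only
    split_ifs <;> linarith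
  right_inv t := by
    dsimp only
    split_ifs <;> linarith

theorem stretchAt_apply (c t : K) :
    stretchAt c t = if t ≤ c then t else if t ≤ c + 1 then 2 * t - c else t + 1 := rfl

theorem stretchAt_of_le {c t : K} (h : t ≤ c) : stretchAt c t = t := if_pos h

theorem stretchAt_of_add_one_le {c t : K} (h : c + 1 ≤ t) : stretchAt c t = t + 1 := by
  rw [stretchAt_apply]
  split_ifs <;> linarith

theorem stretchAt_pow_of_add_one_le {c t : K} (h : c + 1 ≤ t) (n : ℕ) :
    (stretchAt c ^ n) t = t + n := by
  induction n with
  | zero => simp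
  | succ n ih =>
    have hn : c + 1 ≤ t + n := h.trans (le_add_of_nonneg_right n.cast_nonneg)
    rw [pow_succ', Equiv.Perm.mul_apply, ih, stretchAt_of_add_one_le hn, Nat.cast_succ, add_assoc]

theorem semiconjBy_stretchAt {c d : K} (h : c + 1 ≤ d) :
    SemiconjBy (stretchAt c) (stretchAt d) (stretchAt (d + 1)) := by
  ext t
  simp only [Equiv.Perm.mul_apply, stretchAt_apply]
  split_ifs <;> linarith

end PiecewiseLinear

namespace ThompsonF

theorem semiconjBy_x {i n : ℕ} (h : i < n) : SemiconjBy (x i) (x (n + 1)) (x n) := by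
  have hrel : (x i)⁻¹ * x n * x i * (x (n + 1))⁻¹ = 1 :=
    PresentedGroup.one_of_mem (rels := thompsonRels) ⟨i, n, h, rfl⟩
  rw [SemiconjBy, ← mul_inv_eq_one.1 hrel, ← mul_assoc, mul_inv_cancel_left]

section Lift

variable {G : Type*} [Group G]

/-- The homomorphism out of Thompson's group determined by a sequence satisfying its relations. -/
def lift (y : ℕ → G) (hy : ∀ i n, i < n → SemiconjBy (y i) (y (n + 1)) (y n)) : ThompsonF →* G :=
  PresentedGroup.toGroup (f := y) <| by
    rintro _ ⟨i, n, hin, rfl⟩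
    simp only [map_mul, map_inv, FreeGroup.lift_apply_of]
    rw [mul_inv_eq_one, mul_assoc, ← (hy i n hin).eq, inv_mul_cancel_left]

@[simp]
theorem lift_x (y : ℕ → G) (hy : ∀ i n, i < n → SemiconjBy (y i) (y (n + 1)) (y n)) (n : ℕ) :
    lift y hy (x n) = y n :=
  PresentedGroup.toGroup.of _

theorem range_eq_closure (f : ThompsonF →* G) :
    f.range = Subgroup.closure (Set.range fun n => f (x n)) := by
  have hx : Subgroup.closure (Set.range x) = ⊤ := PresentedGroup.closure_range_of thompsonRels
  rw [MonoidHom.range_eq_map, ← hx, MonoidHom.map_closure, ← Set.range_comp, Function.comp_def]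

end Lift

/-- The shift endomorphism of Thompson's group, sending each generator to the next one. -/
def shift : ThompsonF →* ThompsonF :=
  lift (fun n => x (n + 1)) fun _ _ h => semiconjBy_x (Nat.succ_lt_succ h)

@[simp]
theorem shift_x (n : ℕ) : shift (x n) = x (n + 1) := lift_x _ _ n

theorem isConjIdempotent_shift : IsConjIdempotent shift (x 0) := by
  have hcomp : shift.comp shift = (MulAut.conj (x 0)⁻¹).toMonoidHom.comp shift := by
    refine PresentedGroup.ext fun n => ?_
    change shift (shift (x n)) = (x 0)⁻¹ * shift (x n) * (x 0)⁻¹⁻¹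
    rw [shift_x, shift_x, inv_inv, mul_assoc, ← (semiconjBy_x n.succ_pos).eq, inv_mul_cancel_left]
  refine IsConjIdempotent.iff_eq_inv_mul_mul.2 fun g => ?_
  simpa using DFunLike.congr_fun hcomp g

theorem closure_insert_x_zero_range_shift :
    Subgroup.closure (insert (x 0) (Set.range shift)) = ⊤ := by
  rw [eq_top_iff, ← PresentedGroup.closure_range_of thompsonRels]
  refine Subgroup.closure_mono ?_
  rintro _ ⟨_ | n, rfl⟩
  · exact Set.mem_insert _ _
  · exact Set.mem_insert_of_mem _ ⟨x n, shift_x n⟩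

/-- The action of Thompson's group on the line by piecewise linear homeomorphisms. The inverses
turn the relations of `stretchAt` into those of the generators. -/
def toPerm (K : Type*) [Field K] [LinearOrder K] [IsStrictOrderedRing K] :
    ThompsonF →* Equiv.Perm K :=
  lift (fun n => (stretchAt (n : K))⁻¹) fun i n h => by
    have hin : (i : K) + 1 ≤ n := by exact_mod_cast h
    simpa using (semiconjBy_stretchAt hin).inv_right.inv_symm_left

section Action

variable {K : Type*} [Field K] [LinearOrder K] [IsStrictOrderedRing K]

@[simp]
theorem toPerm_x (n : ℕ) : toPerm K (x n) = (stretchAt (n : K))⁻¹ := lift_x _ _ n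

theorem range_shift_comp_shift_le_stabilizer :
    (shift.comp shift).range ≤ (MulAction.stabilizer (Equiv.Perm K) (2 : K)).comap (toPerm K) := by
  rw [range_eq_closure, Subgroup.closure_le]
  rintro _ ⟨n, rfl⟩
  have hfix : stretchAt ((n + 2 : ℕ) : K) 2 = 2 := stretchAt_of_le (by simp)
  change toPerm K (shift (shift (x n))) ∈ MulAction.stabilizer (Equiv.Perm K) (2 : K)
  rw [shift_x, shift_x, toPerm_x, inv_mem_iff]
  exact hfix

end Action

theorem eq_zero_of_x_one_pow_mem_range_shift_comp_shift {n : ℕ}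
    (h : x 1 ^ n ∈ (shift.comp shift).range) : n = 0 := by
  have hfix : (stretchAt (1 : ℚ) ^ n) 2 = 2 := by
    simpa using range_shift_comp_shift_le_stabilizer (K := ℚ) h
  rw [stretchAt_pow_of_add_one_le (by norm_num)] at hfix
  simpa using hfix

theorem shift_injective : Function.Injective shift :=
  isConjIdempotent_shift.injective closure_insert_x_zero_range_shift fun _ h =>
    eq_zero_of_x_one_pow_mem_range_shift_comp_shift (by simpa using h)

end ThompsonF

/-- There is an injective shift endomorphism `φ` of Thompson's group `F` with
`φ(xₙ) = xₙ₊₁` for all `n`, and `φ` is idempotent up to conjugacy: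
`φ(φ(f)) = x₀⁻¹ · φ(f) · x₀` for all `f`. -/
theorem thompsonF_shift_conjugacy_idempotent :
    ∃ φ : ThompsonF →* ThompsonF, Function.Injective φ ∧
      (∀ n : ℕ, φ (x n) = x (n + 1)) ∧
      (∀ f : ThompsonF, φ (φ f) = (x 0)⁻¹ * φ f * x 0) :=
  ⟨ThompsonF.shift, ThompsonF.shift_injective, ThompsonF.shift_x,
    IsConjIdempotent.iff_eq_inv_mul_mul.1 ThompsonF.isConjIdempotent_shift⟩
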